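/- arXiv:2108.03042 — 2 statements merged into one kernel-verified Lean document; each statement's English description precedes it below -/
import Mathlib

section
/- Let p : ℝ → ℝ be continuous on (0,∞), differentiable at every point of (0,∞) with p'(z) > 0 for all z > 0, and with z ↦ p(z)/z² integrable on (0,ρ] for every ρ > 0. Let δ > 0 and β ≥ 2, and let H_δ be the regularized pressure potential. Then H_δ is twice differentiable on (0,∞) and H_δ''(ρ) ≥ 2δ for every ρ > 0; in particular H_δ is strictly convex on (0,∞) (property H2 of Lemma 2.4). -/
open MeasureTheory Set

/-!
The pressure potential `H` of `p` solves `ρ * H' - H = p`; differentiating this relation gives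
`H'' = p' / ρ`. For `β > 1` the power `z ^ β` has potential `ρ ^ β / (β - 1)`, so by linearity `H_δ`
is the pressure potential of `p_δ = p + δ ρ ^ β + δ ρ ^ 2`. Hence `H_δ'' = p_δ' / ρ`, and
`p_δ' ≥ 2 δ ρ` because `p` and `ρ ^ β` are nondecreasing.
-/

/-- The pressure potential `H` of a pressure function `p`. On `(-∞, 0]` it is zero. -/
noncomputable def pressurePotential (p : ℝ → ℝ) (ρ : ℝ) : ℝ :=
  ρ * ∫ z in Ioc (0 : ℝ) ρ, p z / z ^ 2

/-- The regularized pressure `p_δ`. -/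
noncomputable def regularizedPressure (p : ℝ → ℝ) (δ β ρ : ℝ) : ℝ :=
  p ρ + δ * ρ ^ β + δ * ρ ^ 2

/-- The regularized pressure potential `H_δ`, in closed form: it is the pressure potential of `p_δ`
only on `[0, ∞)` and for `1 < β`. -/
noncomputable def regularizedPressurePotential (p : ℝ → ℝ) (δ β ρ : ℝ) : ℝ :=
  pressurePotential p ρ + δ / (β - 1) * ρ ^ β + δ * ρ ^ 2

theorem hasDerivAt_setIntegral_Ioc_right {E : Type*} [NormedAddCommGroup E] [NormedSpace ℝ E]
    [CompleteSpace E] {f : ℝ → E} {a x : ℝ} (hax : a < x) (hint : IntegrableOn f (Ioc a x))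
    (hcont : ContinuousOn f (Ioi a)) :
    HasDerivAt (fun y => ∫ z in Ioc a y, f z) (f x) x := by
  have hinterval : HasDerivAt (fun y => ∫ z in a..y, f z) (f x) x :=
    intervalIntegral.integral_hasDerivAt_right
      ((intervalIntegrable_iff_integrableOn_Ioc_of_le hax.le).2 hint)
      (hcont.stronglyMeasurableAtFilter isOpen_Ioi x hax) (hcont.continuousAt (Ioi_mem_nhds hax))
  refine hinterval.congr_of_eventuallyEq ?_
  filter_upwards [Ioi_mem_nhds hax] with y hy
  exact (intervalIntegral.integral_of_le (mem_Ioi.1 hy).le).symm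

section PressurePotential

variable {p q : ℝ → ℝ} {p' ρ : ℝ}

theorem hasDerivAt_pressurePotential (hρ : 0 < ρ) (hcont : ContinuousOn p (Ioi 0))
    (hint : IntegrableOn (fun z => p z / z ^ 2) (Ioc 0 ρ)) :
    HasDerivAt (pressurePotential p) ((pressurePotential p ρ + p ρ) / ρ) ρ := by
  have hquot : ContinuousOn (fun z => p z / z ^ 2) (Ioi 0) :=
    hcont.div (by fun_prop) fun z hz => pow_ne_zero 2 (mem_Ioi.1 hz).ne'
  refine ((hasDerivAt_id' ρ).mul
    (hasDerivAt_setIntegral_Ioc_right hρ hint hquot)).congr_deriv ?_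
  rw [pressurePotential]
  field_simp

theorem hasDerivAt_deriv_pressurePotential (hρ : 0 < ρ) (hcont : ContinuousOn p (Ioi 0))
    (hint : ∀ r, 0 < r → IntegrableOn (fun z => p z / z ^ 2) (Ioc 0 r))
    (hp : HasDerivAt p p' ρ) :
    HasDerivAt (deriv (pressurePotential p)) (p' / ρ) ρ := by
  have hderiv : deriv (pressurePotential p) =ᶠ[nhds ρ]
      fun r => (pressurePotential p r + p r) / r := by
    filter_upwards [Ioi_mem_nhds hρ] with r hr
    exact (hasDerivAt_pressurePotential hr hcont (hint r hr)).deriv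
  have hquot := ((hasDerivAt_pressurePotential hρ hcont (hint ρ hρ)).add hp).div
    (hasDerivAt_id' ρ) hρ.ne'
  refine (hquot.congr_of_eventuallyEq hderiv).congr_deriv ?_
  simp only [Pi.add_apply]
  field_simp
  ring

theorem strictConvexOn_pressurePotential
    (hint : ∀ r, 0 < r → IntegrableOn (fun z => p z / z ^ 2) (Ioc 0 r))
    (hderiv : ∀ r, 0 < r → 0 < deriv p r) :
    StrictConvexOn ℝ (Ioi 0) (pressurePotential p) := by
  have hdiff (r : ℝ) (hr : 0 < r) : DifferentiableAt ℝ p r :=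
    differentiableAt_of_deriv_ne_zero (hderiv r hr).ne'
  have hcont : ContinuousOn p (Ioi 0) := fun r hr =>
    (hdiff r hr).continuousAt.continuousWithinAt
  refine strictConvexOn_of_deriv2_pos' (convex_Ioi 0) (fun r hr =>
    (hasDerivAt_pressurePotential hr hcont (hint r hr)).continuousAt.continuousWithinAt)
    fun r hr => ?_
  have hsecond := hasDerivAt_deriv_pressurePotential hr hcont hint (hdiff r hr).hasDerivAt
  rw [Function.iterate_succ_apply, Function.iterate_one, hsecond.deriv]
  exact div_pos (hderiv r hr) hr

theorem pressurePotential_add (hp : IntegrableOn (fun z => p z / z ^ 2) (Ioc 0 ρ))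
    (hq : IntegrableOn (fun z => q z / z ^ 2) (Ioc 0 ρ)) :
    pressurePotential (fun z => p z + q z) ρ = pressurePotential p ρ + pressurePotential q ρ := by
  simp only [pressurePotential, add_div, integral_add hp hq, mul_add]

theorem pressurePotential_const_mul (c : ℝ) (p : ℝ → ℝ) (ρ : ℝ) :
    pressurePotential (fun z => c * p z) ρ = c * pressurePotential p ρ := by
  simp only [pressurePotential, mul_div_assoc, integral_const_mul, mul_left_comm]

end PressurePotential

section Power

variable {p : ℝ → ℝ} {β ρ : ℝ}

theorem rpow_div_sq_eqOn_Ioc (β ρ : ℝ) :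
    EqOn (fun z : ℝ => z ^ β / z ^ 2) (fun z => z ^ (β - 2)) (Ioc 0 ρ) := fun z hz => by
  simp only [Real.rpow_sub hz.1, Real.rpow_two]

theorem integrableOn_rpow_div_sq (hβ : 1 < β) (ρ : ℝ) :
    IntegrableOn (fun z : ℝ => z ^ β / z ^ 2) (Ioc 0 ρ) := by
  rw [integrableOn_congr_fun (rpow_div_sq_eqOn_Ioc β ρ) measurableSet_Ioc]
  exact (intervalIntegral.intervalIntegrable_rpow' (by linarith)).1

theorem pressurePotential_rpow (hβ : 1 < β) (hρ : 0 ≤ ρ) :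
    pressurePotential (fun z => z ^ β) ρ = ρ ^ β / (β - 1) := by
  have hexp : β - 2 + 1 = β - 1 := by ring
  calc pressurePotential (fun z => z ^ β) ρ
      = ρ * ∫ z in (0 : ℝ)..ρ, z ^ (β - 2) := by
        rw [pressurePotential, setIntegral_congr_fun measurableSet_Ioc (rpow_div_sq_eqOn_Ioc β ρ),
          intervalIntegral.integral_of_le hρ]
    _ = ρ * (ρ ^ (β - 1) / (β - 1)) := by
        rw [integral_rpow (Or.inl (by linarith)), hexp, Real.zero_rpow (by linarith), sub_zero]
    _ = ρ ^ β / (β - 1) := by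
        rw [← mul_div_assoc, ← Real.rpow_one_add' hρ (by linarith), add_sub_cancel]

theorem integrableOn_const_mul_rpow_div_sq (hβ : 1 < β) (δ ρ : ℝ) :
    IntegrableOn (fun z : ℝ => δ * z ^ β / z ^ 2) (Ioc 0 ρ) := by
  simp only [mul_div_assoc]
  exact (integrableOn_rpow_div_sq hβ ρ).integrable.const_mul δ

theorem integrableOn_add_const_mul_rpow_div_sq (hβ : 1 < β) (δ : ℝ)
    (hint : IntegrableOn (fun z => p z / z ^ 2) (Ioc 0 ρ)) :
    IntegrableOn (fun z => (p z + δ * z ^ β) / z ^ 2) (Ioc 0 ρ) := by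
  simp only [add_div]
  exact hint.add (integrableOn_const_mul_rpow_div_sq hβ δ ρ)

theorem pressurePotential_add_const_mul_rpow (hβ : 1 < β) (hρ : 0 ≤ ρ) (δ : ℝ)
    (hint : IntegrableOn (fun z => p z / z ^ 2) (Ioc 0 ρ)) :
    pressurePotential (fun z => p z + δ * z ^ β) ρ =
      pressurePotential p ρ + δ / (β - 1) * ρ ^ β := by
  rw [pressurePotential_add hint (integrableOn_const_mul_rpow_div_sq hβ δ ρ),
    pressurePotential_const_mul, pressurePotential_rpow hβ hρ, mul_div_assoc', div_mul_eq_mul_div]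

end Power

section Regularized

variable {p : ℝ → ℝ} {p' δ β ρ : ℝ}

theorem regularizedPressure_eq_add_rpow_two (p : ℝ → ℝ) (δ β : ℝ) :
    regularizedPressure p δ β = fun z => (p z + δ * z ^ β) + δ * z ^ (2 : ℝ) := by
  funext z
  rw [regularizedPressure, Real.rpow_two]

theorem integrableOn_regularizedPressure_div_sq (hβ : 1 < β) (δ : ℝ)
    (hint : IntegrableOn (fun z => p z / z ^ 2) (Ioc 0 ρ)) :
    IntegrableOn (fun z => regularizedPressure p δ β z / z ^ 2) (Ioc 0 ρ) := by
  rw [regularizedPressure_eq_add_rpow_two]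
  exact integrableOn_add_const_mul_rpow_div_sq one_lt_two δ
    (integrableOn_add_const_mul_rpow_div_sq hβ δ hint)

theorem pressurePotential_regularizedPressure (hβ : 1 < β) (hρ : 0 ≤ ρ) (δ : ℝ)
    (hint : IntegrableOn (fun z => p z / z ^ 2) (Ioc 0 ρ)) :
    pressurePotential (regularizedPressure p δ β) ρ = regularizedPressurePotential p δ β ρ := by
  rw [regularizedPressure_eq_add_rpow_two, pressurePotential_add_const_mul_rpow one_lt_two hρ δ
      (integrableOn_add_const_mul_rpow_div_sq hβ δ hint),
    pressurePotential_add_const_mul_rpow hβ hρ δ hint, regularizedPressurePotential,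
    Real.rpow_two]
  norm_num

theorem hasDerivAt_regularizedPressure (δ β : ℝ) (hρ : ρ ≠ 0) (hp : HasDerivAt p p' ρ) :
    HasDerivAt (regularizedPressure p δ β)
      (p' + δ * (β * ρ ^ (β - 1)) + δ * (2 * ρ)) ρ := by
  refine ((hp.add ((Real.hasDerivAt_rpow_const (Or.inl hρ)).const_mul δ)).add
    ((hasDerivAt_pow 2 ρ).const_mul δ)).congr_deriv ?_
  norm_num

theorem two_mul_mul_le_deriv_regularizedPressure (hδ : 0 ≤ δ) (hβ : 0 ≤ β) (hρ : 0 < ρ)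
    (hp : DifferentiableAt ℝ p ρ) (hderiv : 0 ≤ deriv p ρ) :
    2 * δ * ρ ≤ deriv (regularizedPressure p δ β) ρ := by
  have hpow : 0 ≤ δ * (β * ρ ^ (β - 1)) := by positivity
  rw [(hasDerivAt_regularizedPressure δ β hρ.ne' hp.hasDerivAt).deriv]
  linarith

end Regularized

theorem regularized_potential_strictly_convex_general {p : ℝ → ℝ} {δ β : ℝ}
    (hdiff : ∀ z, 0 < z → DifferentiableAt ℝ p z)
    (hderiv : ∀ z, 0 < z → 0 ≤ deriv p z)
    (hint : ∀ r, 0 < r → IntegrableOn (fun z => p z / z ^ 2) (Ioc 0 r))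
    (hδ : 0 < δ) (hβ : 1 < β) :
    (∀ ρ, 0 < ρ →
      DifferentiableAt ℝ (regularizedPressurePotential p δ β) ρ ∧
        DifferentiableAt ℝ (deriv (regularizedPressurePotential p δ β)) ρ ∧
          2 * δ ≤ deriv (deriv (regularizedPressurePotential p δ β)) ρ) ∧
    StrictConvexOn ℝ (Ioi 0) (regularizedPressurePotential p δ β) := by
  have hdiffδ (z : ℝ) (hz : 0 < z) : DifferentiableAt ℝ (regularizedPressure p δ β) z :=
    (hasDerivAt_regularizedPressure δ β hz.ne' (hdiff z hz).hasDerivAt).differentiableAt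
  have hcontδ : ContinuousOn (regularizedPressure p δ β) (Ioi 0) := fun z hz =>
    (hdiffδ z hz).continuousAt.continuousWithinAt
  have hderivδ (z : ℝ) (hz : 0 < z) : 2 * δ * z ≤ deriv (regularizedPressure p δ β) z :=
    two_mul_mul_le_deriv_regularizedPressure hδ.le (by linarith) hz (hdiff z hz) (hderiv z hz)
  have hintδ (r : ℝ) (hr : 0 < r) := integrableOn_regularizedPressure_div_sq hβ δ (hint r hr)
  have heq : EqOn (pressurePotential (regularizedPressure p δ β))
      (regularizedPressurePotential p δ β) (Ioi 0) := fun r hr =>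
    pressurePotential_regularizedPressure hβ (mem_Ioi.1 hr).le δ (hint r hr)
  refine ⟨fun ρ hρ => ?_, (strictConvexOn_pressurePotential hintδ fun z hz =>
    (show 0 < 2 * δ * z by positivity).trans_le (hderivδ z hz)).congr heq⟩
  have hnear := (heq.eventuallyEq_of_mem (Ioi_mem_nhds hρ)).symm
  have hfirst := (hasDerivAt_pressurePotential hρ hcontδ (hintδ ρ hρ)).congr_of_eventuallyEq hnear
  have hsecond := (hasDerivAt_deriv_pressurePotential hρ hcontδ hintδ
    (hdiffδ ρ hρ).hasDerivAt).congr_of_eventuallyEq hnear.deriv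
  refine ⟨hfirst.differentiableAt, hsecond.differentiableAt, ?_⟩
  rw [hsecond.deriv, le_div_iff₀ hρ]
  exact hderivδ ρ hρ

/-- Property H2 of Lemma 2.4: if `p' > 0` on `(0,∞)`, `δ > 0` and `β ≥ 2`, the
regularized pressure potential `H_δ` is twice differentiable on `(0,∞)` with
`H_δ'' ≥ 2δ` there; in particular `H_δ` is strictly convex on `(0,∞)`. -/
theorem regularized_potential_strictly_convex (p : ℝ → ℝ)
    (hp_cont : ContinuousOn p (Ioi (0:ℝ)))
    (hp_diff : ∀ z : ℝ, 0 < z → DifferentiableAt ℝ p z)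
    (hp_mono : ∀ z : ℝ, 0 < z → 0 < deriv p z)
    (hp_int : ∀ ρ : ℝ, 0 < ρ → IntegrableOn (fun z => p z / z ^ 2) (Ioc (0:ℝ) ρ))
    (δ β : ℝ) (hδ : 0 < δ) (hβ : 2 ≤ β)
    (H Hδ : ℝ → ℝ)
    (hH : ∀ ρ : ℝ, H ρ = ρ * ∫ z in Ioc (0:ℝ) ρ, p z / z ^ 2)
    (hHδ : ∀ ρ : ℝ, Hδ ρ = H ρ + (δ / (β - 1)) * ρ ^ β + δ * ρ ^ 2) :
    (∀ ρ : ℝ, 0 < ρ →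
      DifferentiableAt ℝ Hδ ρ ∧ DifferentiableAt ℝ (deriv Hδ) ρ ∧
        2 * δ ≤ deriv (deriv Hδ) ρ) ∧
    StrictConvexOn ℝ (Ioi (0:ℝ)) Hδ := by
  obtain rfl : Hδ = regularizedPressurePotential p δ β := funext fun ρ => by
    rw [hHδ, hH, regularizedPressurePotential, pressurePotential]
  exact regularized_potential_strictly_convex_general hp_diff (fun z hz => (hp_mono z hz).le)
    hp_int hδ (one_lt_two.trans_le hβ)
end

section
/- Let n ∈ ℕ, ε ∈ ℝ and t ∈ ℝ. Let ρ : ℝ × ℝⁿ → ℝ be C² and v : ℝ × ℝⁿ → ℝⁿ be C¹, and assume the dissipative continuity equation ∂_t ρ + ∇_x ρ · v + ρ · div v = ε Δρ holds at every point of ℝ × ℝⁿ. Let φ : ℝ → ℝⁿ be differentiable with φ'(s) = v(t+s, φ(s)) for all s, and let d : ℝ → ℝ be differentiable with d'(s) = div v(t+s, φ(s))·d(s) for all s (the Jacobian determinant along the flow). Then for every s ∈ ℝ the function s ↦ ρ(t+s, φ(s))·d(s) is differentiable at s with derivative ε·Δρ(t+s, φ(s))·d(s). -/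
/-- The spatial divergence of a velocity field `v : ℝ × ℝⁿ → ℝⁿ`:
the trace of the spatial derivative `D_x v`. -/
noncomputable def spaceDiv (n : ℕ) (v : ℝ × EuclideanSpace ℝ (Fin n) → EuclideanSpace ℝ (Fin n))
    (q : ℝ × EuclideanSpace ℝ (Fin n)) : ℝ :=
  ∑ i : Fin n, fderiv ℝ v q (0, EuclideanSpace.single i 1) i

/-- The spatial Laplacian of `ρ : ℝ × ℝⁿ → ℝ`: the sum of the second
derivatives in the spatial coordinate directions. -/
noncomputable def spaceLap (n : ℕ) (ρ : ℝ × EuclideanSpace ℝ (Fin n) → ℝ)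
    (q : ℝ × EuclideanSpace ℝ (Fin n)) : ℝ :=
  ∑ i : Fin n,
    fderiv ℝ (fun q' => fderiv ℝ ρ q' ((0 : ℝ), EuclideanSpace.single i 1)) q
      ((0 : ℝ), EuclideanSpace.single i 1)

section Transport

variable {𝕜 E F A : Type*} [NontriviallyNormedField 𝕜]
  [NormedAddCommGroup E] [NormedSpace 𝕜 E] [NormedAddCommGroup F] [NormedSpace 𝕜 F]
  [NormedRing A] [NormedAlgebra 𝕜 A] {t s : 𝕜} {φ : 𝕜 → E}

theorem hasDerivAt_comp_trajectory {f : 𝕜 × E → F} {f' : 𝕜 × E →L[𝕜] F} {w : E}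
    (hf : HasFDerivAt f f' (t + s, φ s)) (hφ : HasDerivAt φ w s) :
    HasDerivAt (fun s' => f (t + s', φ s')) (f' (1, 0) + f' (0, w)) s := by
  have htraj : HasDerivAt (fun s' => (t + s', φ s')) (1, w) s :=
    ((hasDerivAt_id s).const_add t).prodMk hφ
  have hsplit : f' (1, w) = f' (1, 0) + f' (0, w) := by
    rw [← map_add, Prod.mk_add_mk, add_zero, zero_add]
  exact hsplit ▸ hf.comp_hasDerivAt s htraj

theorem hasDerivAt_mul_integratingFactor {r d : 𝕜 → A} {r' a g : A}
    (hr : HasDerivAt r r' s) (hd : HasDerivAt d (a * d s) s) (hODE : r' + r s * a = g) :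
    HasDerivAt (fun s' => r s' * d s') (g * d s) s := by
  refine (hr.mul hd).congr_deriv ?_
  rw [← hODE, add_mul, mul_assoc]

theorem density_times_jacobian_along_flow_general {ρ : 𝕜 × E → A} {v : 𝕜 × E → E}
    {a g : 𝕜 × E → A} {d : 𝕜 → A} (hρ : DifferentiableAt 𝕜 ρ (t + s, φ s))
    (hPDE : fderiv 𝕜 ρ (t + s, φ s) (1, 0) + fderiv 𝕜 ρ (t + s, φ s) (0, v (t + s, φ s))
      + ρ (t + s, φ s) * a (t + s, φ s) = g (t + s, φ s))
    (hφ : HasDerivAt φ (v (t + s, φ s)) s) (hd : HasDerivAt d (a (t + s, φ s) * d s) s) :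
    HasDerivAt (fun s' => ρ (t + s', φ s') * d s') (g (t + s, φ s) * d s) s :=
  hasDerivAt_mul_integratingFactor (hasDerivAt_comp_trajectory hρ.hasFDerivAt hφ) hd hPDE

end Transport

/-- Final transport identity of Corollary 4.3: along the characteristics `φ` of a `C¹`
velocity field `v`, with `d` the Jacobian determinant along the flow (`d' = (div v ∘ φ) d`),
a `C²` solution of the dissipative continuity equation satisfies
`d/ds (ρ(t+s, φ(s)) d(s)) = ε Δρ(t+s, φ(s)) d(s)`. -/
theorem density_times_jacobian_along_flow (n : ℕ) (ε t : ℝ)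
    (ρ : ℝ × EuclideanSpace ℝ (Fin n) → ℝ) (hρ : ContDiff ℝ 2 ρ)
    (v : ℝ × EuclideanSpace ℝ (Fin n) → EuclideanSpace ℝ (Fin n)) (hv : ContDiff ℝ 1 v)
    (hPDE : ∀ q : ℝ × EuclideanSpace ℝ (Fin n),
      fderiv ℝ ρ q ((1 : ℝ), (0 : EuclideanSpace ℝ (Fin n)))
        + fderiv ℝ ρ q ((0 : ℝ), v q) + ρ q * spaceDiv n v q = ε * spaceLap n ρ q)
    (φ : ℝ → EuclideanSpace ℝ (Fin n))
    (hφ : ∀ s : ℝ, HasDerivAt φ (v (t + s, φ s)) s)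
    (d : ℝ → ℝ)
    (hd : ∀ s : ℝ, HasDerivAt d (spaceDiv n v (t + s, φ s) * d s) s) :
    ∀ s : ℝ, HasDerivAt (fun s' => ρ (t + s', φ s') * d s')
      (ε * spaceLap n ρ (t + s, φ s) * d s) s :=
  fun s => density_times_jacobian_along_flow_general (a := spaceDiv n v)
    (g := fun q => ε * spaceLap n ρ q) (hρ.differentiable two_ne_zero _)
    (hPDE _) (hφ s) (hd s)
end
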